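/- Let C be a category with finite limits, X a simplicial object in C, and n, m natural numbers with m > n. Then (cosk_n X)_m is the equalizer of the two maps s, t : ∏_{φ} X_φ → ∏_{α} X_α, where φ ranges over injective order-preserving maps φ : [i] → [m] with i ≤ n (with X_φ := X_i), α ranges over morphisms α : φ → φ' in the category of such injections over [m] (with X_α := X_φ), and on the component indexed by α : φ → φ', s is the projection from X_φ while t is the projection from X_{φ'} followed by α^* : X_{φ'} → X_φ. -/

import Mathlib

open CategoryTheory CategoryTheory.Limits Opposite

namespace Stmt2

/-- The objects of the category `D_m`: injective order-preserving maps `φ : [i] → [m]`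
with `i ≤ n` (encoded by `i : Fin (n+1)` and an injective monotone map
`Fin (i+1) → Fin (m+1)`). -/
def Phi (n m : ℕ) : Type :=
  Σ i : Fin (n + 1), { f : Fin ((i : ℕ) + 1) → Fin (m + 1) // Monotone f ∧ Function.Injective f }

/-- The morphisms of the category `D_m`: injective order-preserving maps `α : [i] → [i']`
commuting with the given injections to `[m]`. -/
def Mor (n m : ℕ) : Type :=
  Σ φ φ' : Phi n m, { g : Fin ((φ.1 : ℕ) + 1) → Fin ((φ'.1 : ℕ) + 1) //
    Monotone g ∧ Function.Injective g ∧ φ'.2.1 ∘ g = φ.2.1 }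

instance (n m : ℕ) : Finite (Phi n m) := by unfold Phi; exact inferInstance
instance (n m : ℕ) : Finite (Mor n m) := by unfold Mor Phi; exact inferInstance

noncomputable instance (n m : ℕ) : Fintype (Phi n m) := Fintype.ofFinite _
noncomputable instance (n m : ℕ) : Fintype (Mor n m) := Fintype.ofFinite _
noncomputable instance (n m : ℕ) : DecidableEq (Phi n m) := Classical.decEq _
noncomputable instance (n m : ℕ) : DecidableEq (Mor n m) := Classical.decEq _

variable {C : Type*} [Category C] [HasFiniteLimits C] (n : ℕ)
  [∀ (F : (SimplexCategory.Truncated n)ᵒᵖ ⥤ C),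
    (SimplexCategory.Truncated.inclusion n).op.HasRightKanExtension F]
  (X : CategoryTheory.SimplicialObject C) (m : ℕ)

/-- `X_φ := X_i` for `φ : [i] → [m]`. -/
def XObj (φ : Phi n m) : C := X.obj (op (SimplexCategory.mk (φ.1 : ℕ)))

/-- The first map `s : ∏_φ X_φ ⟶ ∏_α X_α`; on the component indexed by `α : φ → φ'`
it is the projection from `X_φ`. -/
noncomputable def sMap : (∏ᶜ fun φ : Phi n m => XObj n X m φ) ⟶
    (∏ᶜ fun α : Mor n m => XObj n X m α.1) :=
  Pi.lift fun α => Pi.π (fun φ : Phi n m => XObj n X m φ) α.1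

/-- The second map `t : ∏_φ X_φ ⟶ ∏_α X_α`; on the component indexed by `α : φ → φ'`
it is the projection from `X_{φ'}` followed by `α^*`. -/
noncomputable def tMap : (∏ᶜ fun φ : Phi n m => XObj n X m φ) ⟶
    (∏ᶜ fun α : Mor n m => XObj n X m α.1) :=
  Pi.lift fun α => Pi.π (fun φ : Phi n m => XObj n X m φ) α.2.1 ≫
    X.map (SimplexCategory.mkHom ⟨α.2.2.1, α.2.2.2.1⟩).op

/-- The canonical map `(cosk_n X)_m ⟶ ∏_φ X_φ`, whose `φ`-component (for `φ : [i] → [m]`)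
is the structure map `(cosk_n X)_m ⟶ (cosk_n X)_i` followed by the counit
`(cosk_n X)_i ⟶ X_i` of the adjunction (an isomorphism in degrees `≤ n`). -/
noncomputable def iota :
    ((SimplicialObject.cosk n).obj X).obj (op (SimplexCategory.mk m)) ⟶
      (∏ᶜ fun φ : Phi n m => XObj n X m φ) :=
  Pi.lift fun φ =>
    ((SimplicialObject.cosk n).obj X).map (SimplexCategory.mkHom ⟨φ.2.1, φ.2.2.1⟩).op ≫
      ((SimplicialObject.coskAdj n).counit.app
        ((SimplicialObject.truncation n).obj X)).app
        (op (⟨SimplexCategory.mk (φ.1 : ℕ), by simpa using Fin.is_le φ.1⟩ :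
          SimplexCategory.Truncated n))

section Helpers

/-- The morphism of the simplex category underlying an element of `Phi n m`. -/
def phiHom {n m : ℕ} (φ : Phi n m) : SimplexCategory.mk (φ.1 : ℕ) ⟶ SimplexCategory.mk m :=
  SimplexCategory.mkHom ⟨φ.2.1, φ.2.2.1⟩

/-- An element of `Phi n m` from a monomorphism of the simplex category. -/
def mkPhi {n m : ℕ} {a : SimplexCategory} (ha : a.len ≤ n) (i : a ⟶ SimplexCategory.mk m)
    (hi : Mono i) : Phi n m :=
  ⟨⟨a.len, Nat.lt_succ_of_le ha⟩, ⟨i.toOrderHom, i.toOrderHom.monotone,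
    SimplexCategory.mono_iff_injective.1 hi⟩⟩

/-- Every map `[k] → [m]` with `k ≤ n` is a split epi followed by an element of `Phi`. -/
lemma exists_fac {n m : ℕ} {a : SimplexCategory} (ha : a.len ≤ n)
    (g : a ⟶ SimplexCategory.mk m) :
    ∃ (φ : Phi n m) (e : a ⟶ SimplexCategory.mk (φ.1 : ℕ))
      (s : SimplexCategory.mk (φ.1 : ℕ) ⟶ a), s ≫ e = 𝟙 _ ∧ e ≫ phiHom φ = g := by
  obtain ⟨⟨s⟩⟩ : IsSplitEpi (factorThruImage g) := isSplitEpi_of_epi _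
  refine ⟨mkPhi ((SimplexCategory.len_le_of_epi (factorThruImage g)).trans ha) (image.ι g)
    inferInstance, factorThruImage g, s.section_, ?_, ?_⟩
  · exact s.id
  · exact image.fac g

/-- A morphism of `D_m` from a factorization in the simplex category. -/
def mkMor {n m : ℕ} {ψ φ : Phi n m}
    (α : SimplexCategory.mk (ψ.1 : ℕ) ⟶ SimplexCategory.mk (φ.1 : ℕ))
    (h : α ≫ phiHom φ = phiHom ψ) : Mor n m :=
  ⟨ψ, φ, α.toOrderHom, α.toOrderHom.monotone, by
    have h2 : φ.2.1 ∘ α.toOrderHom = ψ.2.1 := by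
      funext x
      exact congrArg (fun (q : SimplexCategory.mk (ψ.1 : ℕ) ⟶ SimplexCategory.mk m) =>
        q.toOrderHom x) h
    have h1 : Function.Injective (φ.2.1 ∘ α.toOrderHom) := by
      rw [h2]; exact ψ.2.2.2
    exact ⟨h1.of_comp, h2⟩⟩

variable {D : Type*} [Category D] {n m : ℕ} (X : SimplicialObject D) {T : D}

/-- Compatible families. -/
def Compat (p : ∀ φ : Phi n m, T ⟶ X.obj (op (SimplexCategory.mk (φ.1 : ℕ)))) : Prop :=
  ∀ (ψ φ : Phi n m) (α : SimplexCategory.mk (ψ.1 : ℕ) ⟶ SimplexCategory.mk (φ.1 : ℕ)),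
    α ≫ phiHom φ = phiHom ψ → p ψ = p φ ≫ X.map α.op

variable {X}
variable {p : ∀ φ : Phi n m, T ⟶ X.obj (op (SimplexCategory.mk (φ.1 : ℕ)))}

lemma Compat.eq (hp : Compat X p) {a : SimplexCategory} (ha : a.len ≤ n) {φ φ' : Phi n m}
    (e : a ⟶ SimplexCategory.mk (φ.1 : ℕ)) (e' : a ⟶ SimplexCategory.mk (φ'.1 : ℕ))
    (h : e ≫ phiHom φ = e' ≫ phiHom φ') : p φ ≫ X.map e.op = p φ' ≫ X.map e'.op := by
  obtain ⟨ψ, q, s, hs, hq⟩ := exists_fac ha (e ≫ phiHom φ)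
  have key : ∀ (φ : Phi n m) (e : a ⟶ SimplexCategory.mk (φ.1 : ℕ)),
      q ≫ phiHom ψ = e ≫ phiHom φ → p φ ≫ X.map e.op = p ψ ≫ X.map q.op := by
    intro φ e he
    have h1 : (s ≫ e) ≫ phiHom φ = phiHom ψ := by
      rw [Category.assoc, ← he, ← Category.assoc, hs, Category.id_comp]
    rw [hp ψ φ (s ≫ e) h1, Category.assoc, ← X.map_comp, ← op_comp]
    have : q ≫ s ≫ e = e := by
      have hm : Mono (phiHom φ) := SimplexCategory.mono_iff_injective.2 φ.2.2.2
      rw [← cancel_mono (phiHom φ), Category.assoc, h1, he]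
    rw [this]
  rw [key φ e hq, key φ' e' (hq.trans h)]

/-- The component at `g` of the cone of a compatible family. -/
noncomputable def comp (p : ∀ φ : Phi n m, T ⟶ X.obj (op (SimplexCategory.mk (φ.1 : ℕ))))
    {a : SimplexCategory} (ha : a.len ≤ n) (g : a ⟶ SimplexCategory.mk m) : T ⟶ X.obj (op a) :=
  p (exists_fac ha g).choose ≫ X.map (exists_fac ha g).choose_spec.choose.op

lemma Compat.comp_eq (hp : Compat X p) {a : SimplexCategory} (ha : a.len ≤ n)
    (g : a ⟶ SimplexCategory.mk m) (φ : Phi n m) (e : a ⟶ SimplexCategory.mk (φ.1 : ℕ))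
    (h : e ≫ phiHom φ = g) : comp p ha g = p φ ≫ X.map e.op :=
  hp.eq ha _ _ ((exists_fac ha g).choose_spec.choose_spec.choose_spec.2.trans h.symm)

lemma Compat.comp_phi (hp : Compat X p) (φ : Phi n m) (h) : comp p h (phiHom φ) = p φ := by
  rw [hp.comp_eq h (phiHom φ) φ (𝟙 _) (Category.id_comp _)]
  simp

lemma Compat.comp_map (hp : Compat X p) {a b : SimplexCategory} (ha : a.len ≤ n)
    (hb : b.len ≤ n) (g : a ⟶ SimplexCategory.mk m) (f : b ⟶ a) :
    comp p hb (f ≫ g) = comp p ha g ≫ X.map f.op := by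
  obtain ⟨φ, e, s, -, h⟩ := exists_fac ha g
  rw [hp.comp_eq ha g φ e h, hp.comp_eq hb (f ≫ g) φ (f ≫ e) (by rw [Category.assoc, h])]
  simp

/-- The diagram of which `(cosk_n X)_m` is the limit. -/
abbrev diag (n m : ℕ) (X : SimplicialObject D) :
    StructuredArrow (op (SimplexCategory.mk m)) (SimplexCategory.Truncated.inclusion n).op ⥤ D :=
  StructuredArrow.proj (op (SimplexCategory.mk m)) (SimplexCategory.Truncated.inclusion n).op ⋙
    (SimplicialObject.truncation n).obj X

/-- The cone associated to a compatible family. -/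
noncomputable def Compat.cone (hp : Compat X p) : Cone (diag n m X) where
  pt := T
  π :=
    { app := fun g => comp p g.right.unop.property g.hom.unop
      naturality := fun g g' f => by
        have h := hp.comp_map g.right.unop.property g'.right.unop.property g.hom.unop
          f.right.unop.hom
        have h2 : f.right.unop.hom ≫ g.hom.unop = g'.hom.unop :=
          congrArg Quiver.Hom.unop (StructuredArrow.w f)
        rw [h2] at h
        exact (Category.id_comp _).trans h }

/-- The object of the indexing category given by `φ`. -/
def arr (φ : Phi n m) :
    StructuredArrow (op (SimplexCategory.mk m)) (SimplexCategory.Truncated.inclusion n).op :=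
  StructuredArrow.mk (Y := op (⟨SimplexCategory.mk (φ.1 : ℕ), by simpa using Fin.is_le φ.1⟩ :
          SimplexCategory.Truncated n)) (phiHom φ).op

/-- The morphism of the indexing category given by a factorization. -/
def arrHom (φ : Phi n m)
    (g : StructuredArrow (op (SimplexCategory.mk m)) (SimplexCategory.Truncated.inclusion n).op)
    (e : g.right.unop.obj ⟶ SimplexCategory.mk (φ.1 : ℕ)) (h : e ≫ phiHom φ = g.hom.unop) :
    arr φ ⟶ g :=
  StructuredArrow.homMk (Quiver.Hom.op (ObjectProperty.homMk e)) (congrArg Quiver.Hom.op h)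

/-- The family of a cone. -/
def fam (c : Cone (diag n m X)) (φ : Phi n m) :
    c.pt ⟶ X.obj (op (SimplexCategory.mk (φ.1 : ℕ))) := c.π.app (arr φ)

lemma fam_fac (c : Cone (diag n m X)) (φ : Phi n m)
    (g : StructuredArrow (op (SimplexCategory.mk m)) (SimplexCategory.Truncated.inclusion n).op)
    (e : g.right.unop.obj ⟶ SimplexCategory.mk (φ.1 : ℕ)) (h : e ≫ phiHom φ = g.hom.unop) :
    fam c φ ≫ X.map e.op = c.π.app g :=
  c.w (arrHom φ g e h)

lemma fam_compat (c : Cone (diag n m X)) : Compat X (fam c) := fun ψ φ α h =>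
  (fam_fac c φ (arr ψ) α h).symm

lemma hom_ext_of_fam (c : Cone (diag n m X)) {T : D} {f g : T ⟶ c.pt}
    (h : ∀ φ, f ≫ fam c φ = g ≫ fam c φ) (j) : f ≫ c.π.app j = g ≫ c.π.app j := by
  obtain ⟨φ, e, s, -, he⟩ := exists_fac j.right.unop.property j.hom.unop
  rw [← fam_fac c φ j e he]
  exact (Category.assoc _ _ _).symm.trans
    ((congrArg (fun q => q ≫ X.map e.op) (h φ)).trans (Category.assoc _ _ _))

/-- A cone whose family is universal is a limit cone, and conversely; here the direct part. -/
lemma Compat.hasLimit (hp : Compat X p)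
    (lift : ∀ {S : D} (q : ∀ φ : Phi n m, S ⟶ X.obj (op (SimplexCategory.mk (φ.1 : ℕ)))),
      Compat X q → ∃ l : S ⟶ T, ∀ φ, l ≫ p φ = q φ)
    (uniq : ∀ {S : D} (l l' : S ⟶ T), (∀ φ, l ≫ p φ = l' ≫ p φ) → l = l') :
    HasLimit (diag n m X) := by
  have hf : ∀ φ, fam hp.cone φ = p φ := fun φ => hp.comp_phi φ (Fin.is_le φ.1)
  refine ⟨⟨⟨hp.cone, ?_⟩⟩⟩
  refine { lift := fun c => (lift (fam c) (fam_compat c)).choose, fac := ?_, uniq := ?_ }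
  · intro c j
    have h := (lift (fam c) (fam_compat c)).choose_spec
    obtain ⟨φ, e, s, -, he⟩ := exists_fac j.right.unop.property j.hom.unop
    rw [← fam_fac c φ j e he, ← fam_fac hp.cone φ j e he]
    refine (Category.assoc _ _ _).symm.trans (congrArg (fun q => q ≫ X.map e.op) ?_)
    exact (congrArg (fun q => _ ≫ q) (hf φ)).trans (h φ)
  · intro c l hl
    have h := (lift (fam c) (fam_compat c)).choose_spec
    refine uniq _ _ fun φ => ?_
    rw [h φ, ← hf]
    exact hl (arr φ)

end Helpers

lemma fork_compat {D : Type*} [Category D] [HasFiniteLimits D] (n : ℕ) (X : SimplicialObject D)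
    (m : ℕ) {T : D} (f : T ⟶ ∏ᶜ fun φ : Phi n m => XObj n X m φ) :
    f ≫ sMap n X m = f ≫ tMap n X m ↔
      Compat X (fun φ => f ≫ Pi.π (fun φ : Phi n m => XObj n X m φ) φ) := by
  constructor
  · intro h ψ φ α hα
    have := congrArg (fun q => q ≫ Pi.π (fun α : Mor n m => XObj n X m α.1) (mkMor α hα)) h
    simp only [Category.assoc, sMap, tMap, Pi.lift_π] at this
    refine this.trans (Eq.symm ?_)
    have hα' : SimplexCategory.mkHom ⟨(mkMor α hα).2.2.1, (mkMor α hα).2.2.2.1⟩ = α := by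
      apply SimplexCategory.Hom.ext
      refine (SimplexCategory.Hom.toOrderHom_mk _).trans ?_
      apply OrderHom.ext
      funext x
      rfl
    refine (Category.assoc f (Pi.π (fun φ : Phi n m => XObj n X m φ) φ) (X.map α.op)).trans ?_
    exact congrArg (fun β : SimplexCategory.mk (ψ.1 : ℕ) ⟶ SimplexCategory.mk (φ.1 : ℕ) =>
      f ≫ Pi.π (fun φ : Phi n m => XObj n X m φ) φ ≫ X.map β.op) hα'.symm
  · intro h
    refine Pi.hom_ext _ _ fun α => ?_
    simp only [Category.assoc, sMap, tMap, Pi.lift_π]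
    refine (h α.1 α.2.1 (SimplexCategory.mkHom ⟨α.2.2.1, α.2.2.2.1⟩) ?_).trans
      (Category.assoc _ _ _)
    ext x : 3
    exact congrFun α.2.2.2.2.2 x

lemma hasLimit_diag {D : Type*} [Category D] [HasFiniteLimits D] (n : ℕ) (X : SimplicialObject D)
    (m : ℕ) : HasLimit (diag n m X) := by
  refine Compat.hasLimit ((fork_compat n X m (equalizer.ι (sMap n X m) (tMap n X m))).1
    (equalizer.condition _ _)) ?_ ?_
  · intro S q hq
    have hl : ∀ φ, Pi.lift q ≫ Pi.π (fun φ : Phi n m => XObj n X m φ) φ = q φ := fun φ =>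
      Pi.lift_π _ _
    refine ⟨equalizer.lift (Pi.lift q) ((fork_compat n X m (Pi.lift q)).2 ?_), fun φ => ?_⟩
    · have : (fun φ => Pi.lift q ≫ Pi.π (fun φ : Phi n m => XObj n X m φ) φ) = q := funext hl
      exact this.symm ▸ hq
    · refine (Category.assoc _ _ _).symm.trans (Eq.trans ?_ (hl φ))
      exact congrArg (fun r => r ≫ Pi.π (fun φ : Phi n m => XObj n X m φ) φ)
        (equalizer.lift_ι _ _)
  · intro S l l' h
    refine equalizer.hom_ext (Pi.hom_ext _ _ fun φ => ?_)
    rw [Category.assoc, Category.assoc]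
    exact h φ

/-- For `m > n`, `(cosk_n X)_m` is the equalizer of the two maps
`s, t : ∏_φ X_φ ⟶ ∏_α X_α` indexed by the category of injections `[i] → [m]`, `i ≤ n`. -/
theorem coskObjIsEqualizer (hm : n < m)
    (w : iota n X m ≫ sMap n X m = iota n X m ≫ tMap n X m) :
    Nonempty (IsLimit (Fork.ofι (iota n X m) w)) := by
  have hpw : (SimplexCategory.Truncated.inclusion n).op.HasPointwiseRightKanExtension
      ((SimplicialObject.truncation n).obj X) := fun Y => hasLimit_diag n X Y.unop.len
  have hpw' : (SimplexCategory.Truncated.inclusion n).op.HasPointwiseRightKanExtension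
      ((𝟭 (SimplicialObject.Truncated C n)).obj ((SimplicialObject.truncation n).obj X)) := hpw
  have hl := Functor.isPointwiseRightKanExtensionOfIsRightKanExtension
    ((SimplicialObject.cosk n).obj X) ((SimplicialObject.coskAdj n).counit.app
        ((SimplicialObject.truncation n).obj X)) (op (SimplexCategory.mk m))
  let c : Cone (diag n m X) := Functor.RightExtension.coneAt (Functor.RightExtension.mk
    ((SimplicialObject.cosk n).obj X) ((SimplicialObject.coskAdj n).counit.app
        ((SimplicialObject.truncation n).obj X))) (op (SimplexCategory.mk m))
  have hc : IsLimit c := hl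
  have hι : ∀ φ, iota n X m ≫ Pi.π (fun φ : Phi n m => XObj n X m φ) φ = fam c φ := fun φ =>
    Pi.lift_π _ _
  refine ⟨Fork.IsLimit.mk' _ fun s => ?_⟩
  have hs := (fork_compat n X m s.ι).1 s.condition
  refine ⟨hc.lift hs.cone, ?_, ?_⟩
  · refine Pi.hom_ext _ _ fun φ => ?_
    refine (Category.assoc _ _ _).trans ?_
    refine (congrArg (fun q => hc.lift hs.cone ≫ q) (hι φ)).trans ?_
    exact (hc.fac hs.cone (arr φ)).trans (hs.comp_phi φ (Fin.is_le φ.1))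
  · intro l hl'
    refine hc.hom_ext (hom_ext_of_fam c fun φ => ?_)
    refine Eq.trans ?_ ((hc.fac hs.cone (arr φ)).trans (hs.comp_phi φ (Fin.is_le φ.1))).symm
    rw [← hι φ]
    refine (Category.assoc _ _ _).symm.trans ?_
    exact congrArg (fun q => q ≫ Pi.π (fun φ : Phi n m => XObj n X m φ) φ) hl'

end Stmt2
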